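/- Let (K, ∂) be a differential field of characteristic zero with field of constants C = {x ∈ K : ∂x = 0}, and let k be an algebraically closed differential subfield (∂(k) ⊆ k) with C ⊆ k which is self-sufficient in K. Let L be an algebraically closed intermediate field with k ⊆ L ⊆ K, trdeg(L/k) finite and δ(L/k) = 0, and assume that L is contained in a differential subfield M of K (∂(M) ⊆ M) with trdeg(M/k) finite. Then L is itself a differential subfield of K, that is, ∂(L) ⊆ L. -/

import Mathlib

/-!
Write `D` for the derivation `∂`, and attach to `p = (y, x) ∈ Γ(K)` the logarithmic form
`ω_p = dy / y - dx`, viewed as a functional on the `k`-derivations `E` of `K`. The equation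
`∂y = y ∂x` makes `ω_p` horizontal: `D (ω_p(E)) = ω_p([D, E])`.

* Self-sufficiency gives an Ax-type independence statement (`eq_zero_of_sum_omega`): pairs in `Γ(L)`
  independent modulo `Γ(k)` have `K`-linearly independent forms. A shortest linear relation
  between forms has constant coefficients `c i ∈ k`, independent over `ℤ`. It says that
  `∑ c i * dy i / y i` is the exact form `d (∑ c i * x i)`; comparing residues
  (`mem_range_of_sum_logDeriv`) all `y i` lie in `k`, hence `∑ c i * x i ∈ k`, and then `k(x)`
  violates self-sufficiency (`false_of_sum_mem`).
* If `δ(L/k) = 0`, then a basis of `Γ(L)` modulo `Γ(k)` has exactly `n = trdeg(L/k)` elements. Its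
  forms are `n` independent functionals in the `n`-dimensional span of the functionals
  `E ↦ E z`, `z ∈ L`, so a `k`-derivation `E` vanishes on `L` as soon as these forms vanish
  at `E`. By horizontality, if `E` vanishes on `L`, so does `[D, E]`, which means that `E (D x) = 0`
  for `x ∈ L`. As `L` is algebraically closed, an element of `K` killed by all derivations
  over `L` lies in `L`, whence `D x ∈ L` (`mem_of_deltaPre_eq_zero`).
-/

open scoped Classical

noncomputable section

variable {K : Type*} [Field K]

/-- Membership in `Γ(L)` for a subfield `L` of the differential field `(K, der)`:
pairs `(y, x) ∈ L^× × L` with `dery = y·derx`. -/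
def GammaMem (der : K → K) (L : Subfield K) (p : Kˣ × K) : Prop :=
  (p.1 : K) ∈ L ∧ p.2 ∈ L ∧ der (p.1 : K) = (p.1 : K) * der p.2

/-- A family of elements of `Γ(K)` is `ℚ`-linearly independent modulo `Γ(k)`
(equivalently, `ℤ`-linearly independent, since the quotient is torsion-free):
no nontrivial integer combination lies in `Γ(k)`. -/
def GammaIndep (der : K → K) (k : Subfield K) {n : ℕ} (f : Fin n → Kˣ × K) : Prop :=
  ∀ m : Fin n → ℤ,
    GammaMem der k (∏ i, (f i).1 ^ m i, ∑ i, (m i : K) * (f i).2) → m = 0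

/-- `dim_ℚ (Γ(L)/Γ(k))` as an extended natural number: the supremum of the sizes of
finite families of elements of `Γ(L)` that are independent modulo `Γ(k)`. -/
def gammaDim (der : K → K) (k L : Subfield K) : ℕ∞ :=
  ⨆ (n : ℕ) (_ : ∃ f : Fin n → Kˣ × K, (∀ i, GammaMem der L (f i)) ∧ GammaIndep der k f),
    (n : ℕ∞)

/-- A finite family of elements of `K` is algebraically independent over the subfield `k`. -/
def AlgIndepOver (k : Subfield K) {n : ℕ} (x : Fin n → K) : Prop :=
  ∀ P : MvPolynomial (Fin n) K, (∀ m, MvPolynomial.coeff m P ∈ k) →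
    MvPolynomial.eval x P = 0 → P = 0

/-- The transcendence degree of `L` over `k` as an extended natural number: the supremum of
the sizes of finite families of elements of `L` algebraically independent over `k`. -/
def trdegE (k L : Subfield K) : ℕ∞ :=
  ⨆ (n : ℕ) (_ : ∃ x : Fin n → K, (∀ i, x i ∈ L) ∧ AlgIndepOver k x), (n : ℕ∞)

/-- The exponential predimension `δ(L/k) = trdeg(L/k) − dim_ℚ(Γ(L)/Γ(k)) ∈ ℤ ∪ {−∞}`,
with `δ(L/k) = −∞` when the dimension is infinite. -/
def deltaPre (der : K → K) (k L : Subfield K) : WithBot ℤ :=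
  if gammaDim der k L = ⊤ then ⊥
  else (((trdegE k L).toNat : ℤ) - ((gammaDim der k L).toNat : ℤ) : ℤ)

/-- A subfield `k` of `K` is self-sufficient in `K` if `δ(L/k) ≥ 0` for every algebraically
closed intermediate field `L ⊇ k` of finite transcendence degree over `k`. -/
def SelfSufficientIn (der : K → K) (k : Subfield K) : Prop :=
  ∀ L : Subfield K, k ≤ L → IsAlgClosed ↥L → trdegE k L ≠ ⊤ → 0 ≤ deltaPre der k L

end

section Derivations

open Polynomial IntermediateField Differential

/-! ### Derivations of a field of characteristic zero -/

/-- If `K` is algebraic over `F(t)` with `t` transcendental, then `d/dt` extends to `K`: the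
extension `K / F[t]` is formally étale, so `Ω[K⁄F] = K ⊗ Ω[F[t]⁄F]` is free on `dt`. -/
theorem exists_derivation_eq_one {F K : Type*} [Field F] [Field K] [Algebra F K] [CharZero F]
    (t : K) (ht : Transcendental F t) (halg : Algebra.IsAlgebraic F⟮t⟯ K) :
    ∃ E : Derivation F K K, E t = 1 := by
  let : Algebra F[X] K := (aeval t).toAlgebra
  have : IsScalarTower F F[X] K := IsScalarTower.of_algebraMap_eq fun a ↦ by
    simp [RingHom.algebraMap_toAlgebra]
  have hinj : Function.Injective (algebraMap F[X] K) :=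
    transcendental_iff_injective.mp ht
  have : FaithfulSMul F[X] K := (faithfulSMul_iff_algebraMap_injective _ _).mpr hinj
  have : Algebra.IsAlgebraic F[X] K := by
    have := isAlgebraic_adjoin_iff_top.mp halg
    have hmem : ∀ p : F[X], aeval t p ∈ Algebra.adjoin F {t} := fun p ↦
      aeval_mem_adjoin_singleton F t
    refine Algebra.IsAlgebraic.of_ringHom_of_comp_eq (R := F[X]) (A := K) (S := Algebra.adjoin F {t})
      (B := K) ((aeval t).codRestrict _ hmem : F[X] →ₐ[F] Algebra.adjoin F {t}) (RingHom.id K) ?_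
      Function.injective_id ?_
    · rintro ⟨x, hx⟩
      rw [Algebra.adjoin_singleton_eq_range_aeval] at hx
      obtain ⟨p, rfl⟩ := hx
      exact ⟨p, Subtype.ext rfl⟩
    · ext <;> simp [RingHom.algebraMap_toAlgebra]
  let : Algebra (FractionRing F[X]) K := FractionRing.liftAlgebra F[X] K
  have : Algebra.IsAlgebraic (FractionRing F[X]) K :=
    (IsFractionRing.comap_isAlgebraic_iff (A := F[X])).mp inferInstance
  have : CharZero (FractionRing F[X]) :=
    charZero_of_injective_algebraMap (IsFractionRing.injective F[X] (FractionRing F[X]))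
  have : Algebra.FormallyEtale F[X] (FractionRing F[X]) :=
    Algebra.FormallyEtale.of_isLocalization (nonZeroDivisors F[X])
  have : Algebra.FormallyEtale (FractionRing F[X]) K := Algebra.FormallyEtale.of_isSeparable _ _
  have : Algebra.FormallyEtale F[X] K := Algebra.FormallyEtale.comp _ (FractionRing F[X]) _
  let e := KaehlerDifferential.tensorKaehlerEquivOfFormallyEtale F F[X] K
  let l : Ω[F[X]⁄F] →ₗ[F[X]] K :=
    (Algebra.linearMap F[X] K).comp (KaehlerDifferential.polynomialEquiv F).toLinearMap
  let φ : Ω[K⁄F] →ₗ[K] K := (l.liftBaseChange K).comp e.symm.toLinearMap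
  refine ⟨φ.compDer (KaehlerDifferential.D F K), ?_⟩
  have : t = algebraMap F[X] K X := by simp [RingHom.algebraMap_toAlgebra]
  have h1 : e.symm (KaehlerDifferential.D F K t) = 1 ⊗ₜ KaehlerDifferential.D F F[X] X := by
    rw [this]
    exact KaehlerDifferential.tensorKaehlerEquivOfFormallyEtale_symm_D_algebraMap ..
  simp [φ, h1, l]

/-- Extend `t` to a transcendence basis and adjoin the remaining basis elements to `k`. -/
theorem exists_field {k K : Type*} [Field k] [Field K] [Algebra k K] (t : K)
    (ht : Transcendental k t) :
    ∃ F : IntermediateField k K, Transcendental F t ∧ Algebra.IsAlgebraic F⟮t⟯ K := by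
  obtain ⟨s, hs, hsb⟩ := exists_isTranscendenceBasis_superset (R := k) (A := K) (s := {t})
    (by simpa using algebraicIndependent_iff_transcendental.mpr ht)
  have hts : t ∈ s := hs rfl
  refine ⟨adjoin k (s \ {t}), ?_, ?_⟩
  · have := hsb.1.transcendental_adjoin (s := {x | x ≠ ⟨t, hts⟩}) (i := ⟨t, hts⟩) (by simp)
    have hset : ((↑) '' {x : s | x ≠ ⟨t, hts⟩} : Set K) = s \ {t} := by
      ext y
      simp [Subtype.ext_iff, and_comm]
    rw [hset] at this
    exact transcendental_adjoin_iff.mpr this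
  · have := hsb.isAlgebraic_field
    have h : ((adjoin k (s \ {t}))⟮t⟯).restrictScalars k = adjoin k (Set.range ((↑) : s → K)) := by
      rw [adjoin_adjoin_left]
      simp [Set.insert_eq_of_mem hts]
    refine ⟨fun x ↦ ?_⟩
    rw [← h] at this
    exact this.isAlgebraic x


/-! ### Descent of logarithmic relations to a rational function field -/

/-- A relation `∑ c i * u i′ / u i = v′` over a finite extension `N / B` descends to `B`: apply all
automorphisms of a normal closure and add up, which turns the `u i` into norms and `v` into a
trace. An element `b` of the base becomes the power `b ^ d`, with `d` the degree. -/
theorem exists_descent {B N : Type*} [Field B] [CharZero B] [Field N] [Algebra B N]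
    [FiniteDimensional B N] [Differential B] [Differential N] [DifferentialAlgebra B N]
    {ι : Type*} [Fintype ι] (c : ι → B) (u : ι → N) (hu : ∀ i, u i ≠ 0) (v : N)
    (h : ∑ i, algebraMap B N (c i) * logDeriv (u i) = v′) :
    ∃ d : ℕ, 0 < d ∧ ∃ (u₀ : ι → B) (v₀ : B), (∀ i, u₀ i ≠ 0) ∧
      ∑ i, c i * logDeriv (u₀ i) = v₀′ ∧ ∀ i b, u i = algebraMap B N b → u₀ i = b ^ d := by
  let j := IsAlgClosed.lift (M := AlgebraicClosure B) (R := B) (S := N)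
  have : FiniteDimensional B j.fieldRange := LinearMap.finiteDimensional_range j.toLinearMap
  let G := normalClosure B j.fieldRange (AlgebraicClosure B)
  let f : N →ₐ[B] G := (inclusion (le_normalClosure j.fieldRange)).comp j.rangeRestrict
  have : IsGalois B G := {}
  have hf : Function.Injective f := f.injective
  have h2 : ∑ i, algebraMap B G (c i) * logDeriv (f (u i)) = (f v)′ := by
    rw [← algHom_deriv' f hf, ← h]
    simp [Differential.logDeriv, algHom_deriv' f hf]
  have hσ : ∀ σ : G ≃ₐ[B] G,
     ∑ i, algebraMap B G (c i) * logDeriv (σ (f (u i))) = (σ (f v))′ := by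
    intro σ
    have := congrArg σ h2
    rw [algEquiv_deriv'] at this
    rw [← this]
    simp [Differential.logDeriv, algEquiv_deriv']
  refine ⟨Module.finrank B G, Module.finrank_pos, fun i ↦ Algebra.norm B (f (u i)),
    Algebra.trace B G (f v), fun i ↦ ?_, ?_, fun i b hb ↦ ?_⟩
  · simpa [Algebra.norm_eq_zero_iff] using hu i
  · apply (algebraMap B G).injective
    simp only [map_sum, map_mul, ← logDeriv_algebraMap, ← deriv_algebraMap]
    simp only [Algebra.norm_eq_prod_automorphisms, trace_eq_sum_automorphisms, map_sum, ← hσ]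
    rw [Finset.sum_comm]
    refine Finset.sum_congr rfl fun i _ ↦ ?_
    rw [logDeriv_prod _ _ _ (by simpa using hu i), Finset.mul_sum]
  · simp [hb, Algebra.norm_algebraMap]

/-! ### Residues at a point of the rational function field -/

/-- The local ring at `t = 0` of `F(t) ⊆ K`: the elements `p(t) / q(t)` with `q(0) ≠ 0`
(written without division, which makes it visibly a subalgebra). -/
def regularAt (F : Type*) {K : Type*} [Field F] [Field K] [Algebra F K] (t : K) :
    Subalgebra F K where
  carrier := {z | ∃ p q : F[X], q.eval 0 ≠ 0 ∧ z * aeval t q = aeval t p}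
  mul_mem' := by
    rintro a b ⟨p, q, hq, h⟩ ⟨p', q', hq', h'⟩
    refine ⟨p * p', q * q', by simp [hq, hq'], ?_⟩
    rw [map_mul, map_mul, ← h, ← h']; ring
  add_mem' := by
    rintro a b ⟨p, q, hq, h⟩ ⟨p', q', hq', h'⟩
    refine ⟨p * q' + p' * q, q * q', by simp [hq, hq'], ?_⟩
    simp only [map_mul, map_add, ← h, ← h']; ring
  algebraMap_mem' r := ⟨C r, 1, by simp, by simp⟩

section
variable {F K : Type*} [Field F] [Field K] [Algebra F K] {t : K}

theorem mem_regularAt {z : K} : z ∈ regularAt F t ↔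
    ∃ p q : F[X], q.eval 0 ≠ 0 ∧ z * aeval t q = aeval t p := Iff.rfl

theorem aeval_mem_regularAt (p : F[X]) : aeval t p ∈ regularAt F t := ⟨p, 1, by simp, by simp⟩

theorem self_mem_regularAt : t ∈ regularAt F t := by simpa using aeval_mem_regularAt (F := F) (t := t) X

theorem aeval_inv_mem_regularAt (ht : Transcendental F t) {p : F[X]} (hp : p.eval 0 ≠ 0) :
    (aeval t p)⁻¹ ∈ regularAt F t := by
  refine ⟨1, p, hp, ?_⟩
  have : aeval t p ≠ 0 := fun h ↦ ht ⟨p, by rintro rfl; simp at hp, h⟩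
  simp [this]

/-- A constant divisible by `t` in the local ring vanishes. -/
theorem eq_zero_of_eq_mul (ht : Transcendental F t) {s : F} {o : K} (ho : o ∈ regularAt F t)
    (h : algebraMap F K s = t * o) : s = 0 := by
  obtain ⟨p, q, hq, hpq⟩ := ho
  have h1 : C s * q = X * p := transcendental_iff_injective.mp ht <| by
    simp [← hpq, h, mul_assoc]
  have := congrArg (eval 0) h1
  simpa [hq] using this

theorem derivation_mem_regularAt (E : Derivation F K K) (hE : E t = 1)
    {z : K} (hz : z ∈ regularAt F t) : E z ∈ regularAt F t := by
  obtain ⟨p, q, hq, h⟩ := hz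
  refine ⟨derivative p * q - p * derivative q, q * q, by simp [hq], ?_⟩
  have h1 := congrArg E h
  simp only [Derivation.leibniz, Derivation.map_aeval, hE, smul_eq_mul, mul_one] at h1
  simp only [map_mul, map_sub, ← h1, ← h]
  ring

/-- Nonzero elements of `F(t)` are a power of `t` times a unit of the local ring. -/
theorem exists_eq_zpow_mul (ht : Transcendental F t) {z : K} (hz : z ∈ F⟮t⟯) (h0 : z ≠ 0) :
    ∃ (e : ℤ) (u : K), u ≠ 0 ∧ u ∈ regularAt F t ∧ u⁻¹ ∈ regularAt F t ∧ z = t ^ e * u := by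
  have ht0 : t ≠ 0 := fun h ↦ ht (h ▸ isAlgebraic_zero)
  have key : ∀ p : F[X], p ≠ 0 → ∃ (n : ℕ) (p' : F[X]), p'.eval 0 ≠ 0 ∧ p = X ^ n * p' := by
    intro p hp
    obtain ⟨q, hq, hd⟩ := exists_eq_pow_rootMultiplicity_mul_and_not_dvd p hp 0
    simp only [map_zero, sub_zero] at hq hd
    exact ⟨_, q, by rwa [X_dvd_iff, coeff_zero_eq_eval_zero] at hd, hq⟩
  obtain ⟨p, q, rfl⟩ := (mem_adjoin_simple_iff F z).mp hz
  have hp : p ≠ 0 := by rintro rfl; simp at h0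
  have hq : q ≠ 0 := by rintro rfl; simp at h0
  obtain ⟨n, p', hp', rfl⟩ := key p hp
  obtain ⟨m, q', hq', rfl⟩ := key q hq
  refine ⟨n - m, aeval t p' / aeval t q', ?_, ?_, ?_, ?_⟩
  · simp only [map_mul, ne_eq, div_eq_zero_iff, mul_eq_zero, not_or] at h0 ⊢
    exact ⟨h0.1.2, h0.2.2⟩
  · rw [div_eq_mul_inv]
    exact mul_mem (aeval_mem_regularAt _) (aeval_inv_mem_regularAt ht hq')
  · rw [inv_div, div_eq_mul_inv]
    exact mul_mem (aeval_mem_regularAt _) (aeval_inv_mem_regularAt ht hp')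
  · rw [zpow_sub₀ ht0]
    simp only [map_mul, map_pow, aeval_X, zpow_natCast]
    rw [mul_div_mul_comm]

/-- The residue at `t = 0` of the derivative of a rational function is zero: a pole of order `m` is
turned by `d/dt` into a pole of order `m + 1 ≥ 2` with nonzero leading coefficient. -/
theorem residue_derivation_eq_zero [CharZero F] (ht : Transcendental F t) (E : Derivation F K K)
    (hE : E t = 1) {w o : K} (hw : w ∈ F⟮t⟯) (ho : o ∈ regularAt F t) {s : F}
    (h : E w = algebraMap F K s / t + o) : s = 0 := by
  have ht0 : t ≠ 0 := fun h ↦ ht (h ▸ isAlgebraic_zero)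
  have hreg : w ∈ regularAt F t → s = 0 := fun hw ↦ by
    refine eq_zero_of_eq_mul ht (sub_mem (derivation_mem_regularAt E hE hw) ho) ?_
    rw [h]; field_simp; ring
  rcases eq_or_ne w 0 with rfl | hw0
  · exact hreg (zero_mem _)
  obtain ⟨e, u, hu0, hu, hu', rfl⟩ := exists_eq_zpow_mul ht hw hw0
  obtain ⟨n, rfl | rfl⟩ := e.eq_nat_or_neg
  · exact hreg (mul_mem (by simpa using pow_mem self_mem_regularAt n) hu)
  rcases n with _ | m
  · exact hreg (by simpa using hu)
  exfalso
  set w := t ^ (-((m + 1 : ℕ) : ℤ)) * u with hwdef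
  have hwt : w * t ^ (m + 1) = u := by
    rw [hwdef, zpow_neg, zpow_natCast]; field_simp
  have h1 := congrArg E hwt
  simp only [Derivation.leibniz, Derivation.leibniz_pow, hE, h, smul_eq_mul, nsmul_eq_mul,
    add_tsub_cancel_right, mul_one] at h1
  have hc : ((m + 1 : ℕ) : F) ≠ 0 := by exact_mod_cast m.succ_ne_zero
  have hc' : ((m + 1 : ℕ) : K) = algebraMap F K ((m + 1 : ℕ) : F) := by simp
  have h2 : ((m + 1 : ℕ) : K) * u = t * (E u - (algebraMap F K s + t * o) * t ^ m) := by
    rw [← h1, ← hwt]; field_simp; ring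
  refine hc (eq_zero_of_eq_mul ht (o := (E u - (algebraMap F K s + t * o) * t ^ m) * u⁻¹) ?_ ?_)
  · refine mul_mem (sub_mem (derivation_mem_regularAt E hE hu) (mul_mem (add_mem
      (algebraMap_mem _ s) (mul_mem self_mem_regularAt ho)) (pow_mem self_mem_regularAt m))) hu'
  · rw [← hc', ← mul_assoc, ← h2]; field_simp

/-- Taking residues at `t = 0` in `∑ c i * z i′ / z i = w′` gives `∑ e i * c i = 0`, where `e i` is
the order of `z i` at `t = 0`; here `e j = d > 0`. -/
theorem exists_int_relation [CharZero F] (ht : Transcendental F t) (E : Derivation F K K)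
    (hE : E t = 1) {ι : Type*} [Fintype ι] (c : ι → F) (z : ι → K) (w : K)
    (hz : ∀ i, z i ∈ F⟮t⟯) (hz0 : ∀ i, z i ≠ 0) (hw : w ∈ F⟮t⟯)
    (h : ∑ i, algebraMap F K (c i) * (E (z i) / z i) = E w) {j : ι} {d : ℕ} (hd : 0 < d)
    (hj : z j = t ^ d) : ∃ m : ι → ℤ, m ≠ 0 ∧ ∑ i, (m i : F) * c i = 0 := by
  have ht0 : t ≠ 0 := fun h ↦ ht (h ▸ isAlgebraic_zero)
  -- for `i = j` the order is pinned to `d`, which makes the relation nontrivial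
  have key : ∀ i, ∃ (e : ℤ) (u : K), (u ≠ 0 ∧ u ∈ regularAt F t ∧ u⁻¹ ∈ regularAt F t ∧
      z i = t ^ e * u) ∧ (i = j → e = d) := fun i ↦ by
    by_cases hi : i = j
    · exact ⟨d, 1, ⟨one_ne_zero, one_mem _, by simp, by simp [hi, hj]⟩, fun _ ↦ rfl⟩
    · obtain ⟨e, u, hu⟩ := exists_eq_zpow_mul ht (hz i) (hz0 i)
      exact ⟨e, u, hu, fun h ↦ absurd h hi⟩
  choose e u hu hej using key
  refine ⟨e, fun h0 ↦ ?_, ?_⟩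
  · have := hej j rfl
    simp [h0] at this
    lia
  refine residue_derivation_eq_zero ht E hE hw
    (o := ∑ i, algebraMap F K (c i) * (E (u i) * (u i)⁻¹)) ?_ ?_
  · exact sum_mem fun i _ ↦ mul_mem (algebraMap_mem _ _)
      (mul_mem (derivation_mem_regularAt E hE (hu i).2.1) (hu i).2.2.1)
  · rw [← h, map_sum, Finset.sum_div, ← Finset.sum_add_distrib]
    refine Finset.sum_congr rfl fun i _ ↦ ?_
    obtain ⟨hu0, -, -, hzi⟩ := hu i
    rw [hzi, Derivation.leibniz, Derivation.leibniz_zpow, hE]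
    simp only [smul_eq_mul, zsmul_eq_mul, map_mul, map_intCast, mul_one]
    rw [zpow_sub_one₀ ht0]
    field_simp
    ring
end

/-! ### Exact logarithmic forms -/

section
variable {k K : Type*} [Field k] [Field K] [Algebra k K]

theorem exists_derivation_eq_one' [CharZero k] {y : K} (hy : Transcendental k y) :
    ∃ E : Derivation k K K, E y = 1 := by
  obtain ⟨F, hF, halg⟩ := exists_field y hy
  obtain ⟨E, hE⟩ := exists_derivation_eq_one y hF halg
  exact ⟨E.restrictScalars k, hE⟩

theorem mem_range_of_isAlgebraic [IsAlgClosed k] {y : K} (hy : IsAlgebraic k y) :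
    y ∈ (algebraMap k K).range := by
  exact minpoly.mem_range_of_degree_eq_one k y
    (IsAlgClosed.degree_eq_one_of_irreducible k (minpoly.irreducible hy.isIntegral))

theorem mem_range_of_forall_derivation [CharZero k] [IsAlgClosed k] {y : K}
    (hy : ∀ E : Derivation k K K, E y = 0) :
    y ∈ (algebraMap k K).range := by
  by_contra h
  obtain ⟨E, hE⟩ := exists_derivation_eq_one' (k := k) (y := y) fun h' ↦ h (mem_range_of_isAlgebraic h')
  simp [hy] at hE

theorem derivation_mem_adjoin {F K : Type*} [Field F] [Field K] [Algebra F K] {t : K} (E : Derivation F K K)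
    (hE : E t = 1) {z : K} (hz : z ∈ F⟮t⟯) : E z ∈ F⟮t⟯ := by
  have hp : ∀ p : F[X], aeval t p ∈ F⟮t⟯ := fun p ↦
    algebra_adjoin_le_adjoin F {t} (aeval_mem_adjoin_singleton F t)
  obtain ⟨p, q, rfl⟩ := (mem_adjoin_simple_iff F z).mp hz
  rw [Derivation.leibniz_div]
  simp only [Derivation.map_aeval, hE, smul_eq_mul, mul_one]
  exact mul_mem (pow_mem (inv_mem (hp _)) 2)
    (sub_mem (mul_mem (hp _) (hp _)) (mul_mem (hp _) (hp _)))

/-- If the `c i` are constants of an algebraically closed `k`, linearly independent over `ℤ`, and the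
form `∑ c i * dy i / y i` is exact, then all `y i` are in `k`. Otherwise some `y j = t` is
transcendental; extend `d/dt`, descend the relation to a rational function field `F(t)`
and compare residues at `t = 0`. -/
theorem mem_range_of_sum_logDeriv [CharZero k] [IsAlgClosed k] {ι : Type*} [Fintype ι] (c : ι → k)
    (hc : ∀ m : ι → ℤ, ∑ i, (m i : k) * c i = 0 → m = 0) (y : ι → K) (hy : ∀ i, y i ≠ 0) (x : K)
    (h : ∀ E : Derivation k K K, ∑ i, algebraMap k K (c i) * (E (y i) / y i) = E x) (j : ι) :
    y j ∈ (algebraMap k K).range := by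
  by_contra hj
  set t := y j with htdef
  have hj : Transcendental k t := fun h' ↦ hj (mem_range_of_isAlgebraic h')
  obtain ⟨F, hF, halg⟩ := exists_field t hj
  obtain ⟨E, hE⟩ := exists_derivation_eq_one t hF halg
  have hmem : ∀ z ∈ F⟮t⟯, E z ∈ F⟮t⟯ := fun z hz ↦ derivation_mem_adjoin E hE hz
  let B := F⟮t⟯
  let dK : Differential K := ⟨E.restrictScalars ℤ⟩
  let dB : Differential B := ⟨Derivation.mk' (AddMonoidHom.toIntLinearMap
    { toFun := fun b ↦ ⟨E b, hmem b b.2⟩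
      map_zero' := by ext; simp
      map_add' := fun a b ↦ by ext; simp }) fun a b ↦ by ext; simp⟩
  have hBK : DifferentialAlgebra B K := ⟨fun b ↦ rfl⟩
  let N := adjoin B (Set.range y ∪ {x})
  have hNfin : FiniteDimensional B N := by
    apply finiteDimensional_adjoin
    intro z _
    exact (halg.isAlgebraic z).isIntegral
  have hyN : ∀ i, y i ∈ N := fun i ↦ subset_adjoin _ _ (Or.inl ⟨i, rfl⟩)
  have hxN : x ∈ N := subset_adjoin _ _ (Or.inr rfl)
  have htB : t ∈ B := mem_adjoin_simple_self F t
  have hcF : ∀ i, algebraMap k K (c i) = algebraMap F K (algebraMap k F (c i)) := fun i ↦ rfl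
  obtain ⟨d, hd, u₀, v₀, hu₀, h₀, hj₀⟩ := exists_descent (B := B) (N := N)
    (fun i ↦ algebraMap k B (c i)) (fun i ↦ ⟨y i, hyN i⟩) (fun i hi ↦ hy i (congrArg Subtype.val hi)) ⟨x, hxN⟩ (by
      apply (algebraMap N K).injective
      simp only [map_sum, map_mul, ← logDeriv_algebraMap, ← deriv_algebraMap]
      exact h (E.restrictScalars k))
  obtain ⟨m, hm0, hm⟩ := exists_int_relation hF E hE (fun i ↦ algebraMap k F (c i))
    (fun i ↦ (u₀ i : K)) v₀ (fun i ↦ (u₀ i).2) (fun i ↦ by simpa using hu₀ i) v₀.2 (by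
      have := congrArg (algebraMap B K) h₀
      simp only [map_sum, map_mul, ← logDeriv_algebraMap, ← deriv_algebraMap] at this
      exact this) (j := j) hd (by
      rw [hj₀ j ⟨t, htB⟩ rfl]; rfl)
  refine hm0 (hc m ((algebraMap k F).injective ?_))
  simpa using hm
end

/-! ### The forms attached to `Γ(K)` -/

section
variable {K : Type*} [Field K]

/-- The integer combination `∑ m i • f i` in the group `Kˣ × K`, written multiplicatively in the
first factor. -/
def gammaComb {n : ℕ} (f : Fin n → Kˣ × K) (m : Fin n → ℤ) : Kˣ × K :=
  (∏ i, (f i).1 ^ m i, ∑ i, (m i : K) * (f i).2)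

theorem gammaComb_gammaComb {n s : ℕ} (f : Fin n → Kˣ × K) (A : Fin s → Fin n → ℤ)
    (m : Fin s → ℤ) :
    gammaComb (fun i ↦ gammaComb f (A i)) m = gammaComb f (fun j ↦ ∑ i, m i * A i j) := by
  simp only [gammaComb, Prod.mk.injEq]
  constructor
  · simp only [← Finset.prod_zpow, ← zpow_mul]
    rw [Finset.prod_comm]
    refine Finset.prod_congr rfl fun j _ ↦ ?_
    have hsum : ∀ g : Fin s → ℤ, ∏ i, (f j).1 ^ g i = (f j).1 ^ ∑ i, g i := fun g ↦
      (map_prod (zpowersHom Kˣ (f j).1) (fun i ↦ Multiplicative.ofAdd (g i)) Finset.univ).symm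
    simp only [hsum, mul_comm]
  · simp only [Finset.mul_sum, Int.cast_sum, Finset.sum_mul]
    rw [Finset.sum_comm]
    simp only [Int.cast_mul, mul_assoc]

/-- Combining independent elements by an integer matrix with trivial left kernel keeps them
independent. -/
theorem GammaIndep.comb {der : K → K} {k : Subfield K} {n s : ℕ} {f : Fin n → Kˣ × K}
    (hf : GammaIndep der k f) (A : Fin s → Fin n → ℤ)
    (hA : ∀ m : Fin s → ℤ, (∀ j, ∑ i, m i * A i j = 0) → m = 0) :
    GammaIndep der k (fun i ↦ gammaComb f (A i)) := by
  intro m hm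
  change GammaMem der k (gammaComb _ m) at hm
  rw [gammaComb_gammaComb] at hm
  exact hA m fun j ↦ congrFun (hf _ hm) j

/-- The logarithmic form `ω_p = dy / y - dx` of a pair `p = (y, x)`, as a `K`-linear functional on
the `k`-derivations of `K` (instead of an element of `Ω[K⁄k]`). -/
def omega (k : Subfield K) (p : Kˣ × K) : Derivation k K K →ₗ[K] K where
  toFun E := E (p.1 : K) / p.1 - E p.2
  map_add' E E' := by simp; ring
  map_smul' a E := by simp; ring

theorem omega_apply (k : Subfield K) (p : Kˣ × K) (E : Derivation k K K) :
    omega k p E = E (p.1 : K) / p.1 - E p.2 := rfl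

theorem derivation_prod_zpow {R : Type*} [CommRing R] [Algebra R K] (E : Derivation R K K)
    {ι : Type*} (s : Finset ι) (u : ι → Kˣ) (m : ι → ℤ) :
    E ((∏ i ∈ s, u i ^ m i : Kˣ) : K) / ((∏ i ∈ s, u i ^ m i : Kˣ) : K) =
      ∑ i ∈ s, (m i : K) * (E (u i) / u i) := by
  induction s using Finset.induction_on with
  | empty => simp
  | insert a s ha ih =>
    rw [Finset.prod_insert ha, Finset.sum_insert ha, ← ih]
    have h1 := (u a).ne_zero
    have h2 := (∏ i ∈ s, u i ^ m i).ne_zero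
    rw [Units.val_mul, Derivation.leibniz, Units.val_zpow_eq_zpow_val, Derivation.leibniz_zpow,
      zpow_sub_one₀ h1]
    have h3 := zpow_ne_zero (m a) h1
    simp only [smul_eq_mul, zsmul_eq_mul]
    field_simp
    ring

theorem omega_gammaComb (k : Subfield K) {n : ℕ} (f : Fin n → Kˣ × K) (m : Fin n → ℤ) :
    omega k (gammaComb f m) = ∑ i, (m i : K) • omega k (f i) := by
  ext E
  simp only [omega_apply, gammaComb, derivation_prod_zpow, LinearMap.sum_apply,
    LinearMap.smul_apply, map_sum, Derivation.leibniz, smul_eq_mul, Derivation.map_intCast]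
  rw [← Finset.sum_sub_distrib]
  refine Finset.sum_congr rfl fun i _ ↦ ?_
  ring

theorem gammaMem_iff (D : Derivation ℤ K K) (L : Subfield K) (p : Kˣ × K) :
    GammaMem D L p ↔ (p.1 : K) ∈ L ∧ p.2 ∈ L ∧ D (p.1 : K) / p.1 = D p.2 := by
  rw [GammaMem, div_eq_iff p.1.ne_zero, mul_comm (D p.2)]

theorem GammaMem.comb {D : Derivation ℤ K K} {L : Subfield K} {n : ℕ} {f : Fin n → Kˣ × K}
    (hf : ∀ i, GammaMem D L (f i)) (m : Fin n → ℤ) : GammaMem D L (gammaComb f m) := by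
  simp only [gammaMem_iff] at hf ⊢
  refine ⟨?_, ?_, ?_⟩
  · simp only [gammaComb, Units.coe_prod, Units.val_zpow_eq_zpow_val]
    exact prod_mem fun i _ ↦ zpow_mem (hf i).1 _
  · change ∑ i, (m i : K) * (f i).2 ∈ L
    exact sum_mem fun i _ ↦ mul_mem (intCast_mem _ _) (hf i).2.1
  · simp only [gammaComb, derivation_prod_zpow, (hf _).2.2, map_sum, Derivation.leibniz,
      Derivation.map_intCast]
    simp

/-- A derivation that vanishes on `k` is `k`-linear. -/
theorem exists_derivation_of_eq_zero (k : Subfield K) (E : Derivation ℤ K K)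
    (hE : ∀ c ∈ k, E c = 0) : ∃ E' : Derivation k K K, ∀ x, E' x = E x :=
  ⟨Derivation.mk' { E.toLinearMap.toAddMonoidHom with
    map_smul' := fun c x ↦ by simp [Subfield.smul_def, hE c c.2] } fun a b ↦ by simp, fun x ↦ rfl⟩

/-- Since `D` preserves `k`, the commutator `[D, E]` is again `k`-linear. -/
theorem exists_commutator {D : Derivation ℤ K K} {k : Subfield K} (hk : ∀ c ∈ k, D c ∈ k)
    (E : Derivation k K K) : ∃ E' : Derivation k K K, ∀ x, E' x = D (E x) - E (D x) := by
  obtain ⟨E', hE'⟩ := exists_derivation_of_eq_zero k ⁅D, E.restrictScalars ℤ⁆ fun c hc ↦ by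
    have h1 : E c = 0 := E.map_algebraMap ⟨c, hc⟩
    have h2 : E (D c) = 0 := E.map_algebraMap ⟨_, hk c hc⟩
    simp [Derivation.commutator_apply, h1, h2]
  exact ⟨E', fun x ↦ by simp [hE', Derivation.commutator_apply]⟩

/-- The forms `ω_p` with `p ∈ Γ(K)` are horizontal: their Lie derivative along `D` vanishes, that is,
`D (ω_p(E)) = ω_p([D, E])`. -/
theorem derivation_omega {D : Derivation ℤ K K} {k : Subfield K}
    {E E' : Derivation k K K} (hE' : ∀ x, E' x = D (E x) - E (D x)) {L : Subfield K}
    {p : Kˣ × K} (hp : GammaMem D L p) : D (omega k p E) = omega k p E' := by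
  obtain ⟨-, -, h⟩ := hp
  have h0 := p.1.ne_zero
  simp only [omega_apply, hE', map_sub, Derivation.leibniz_div, h, Derivation.leibniz, smul_eq_mul]
  field_simp
  ring
end

/-! ### Transcendence degree and relative algebraic closure -/

section
variable {K : Type*} [Field K]

theorem algIndepOver_iff {k : Subfield K} {n : ℕ} {x : Fin n → K} :
    AlgIndepOver k x ↔ AlgebraicIndependent k x := by
  rw [algebraicIndependent_iff]
  have hev : ∀ p : MvPolynomial (Fin n) k,
      MvPolynomial.eval x (MvPolynomial.map (algebraMap k K) p) = MvPolynomial.aeval x p := fun p ↦ by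
    rw [MvPolynomial.eval_map, MvPolynomial.aeval_def]
  have hinj := MvPolynomial.map_injective (σ := Fin n) (algebraMap k K) (algebraMap k K).injective
  constructor
  · intro h p hp
    have := h (MvPolynomial.map (algebraMap k K) p) (fun m ↦ by
      rw [MvPolynomial.coeff_map]; exact (MvPolynomial.coeff m p).2) (by rw [hev, hp])
    exact hinj (by simpa using this)
  · intro h P hP hP0
    obtain ⟨p, rfl⟩ : P ∈ Set.range (MvPolynomial.map (algebraMap k K)) := by
      rw [MvPolynomial.mem_range_map_iff_coeffs_subset]
      intro c hc
      obtain ⟨m, -, rfl⟩ := MvPolynomial.mem_coeffs_iff.mp hc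
      exact ⟨⟨_, hP m⟩, rfl⟩
    rw [h p (by rw [← hev, hP0]), map_zero]

/-- A family algebraically independent over `k` and algebraic over `k(g 1, …, g s)` has at most `s`
members. -/
theorem le_of_isAlgebraic_adjoin {k : Subfield K} {s n : ℕ} (g : Fin s → K) {t : Fin n → K}
    (ht : AlgebraicIndependent k t)
    (h : ∀ i, IsAlgebraic (IntermediateField.adjoin k (Set.range g)) (t i)) : n ≤ s := by
  have hind : (AlgebraicIndependent.matroid k K).Indep (Set.range t) := by
    rw [AlgebraicIndependent.matroid_indep_iff]
    exact ht.to_subtype_range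
  have h1 : Set.range t ⊆ (AlgebraicIndependent.matroid k K).closure (Set.range g) := by
    rw [AlgebraicIndependent.matroid_closure_eq]
    rintro _ ⟨i, rfl⟩
    exact IntermediateField.isAlgebraic_adjoin_iff.mp (h i)
  have h2 := hind.encard_le_eRk_of_subset h1
  rw [Matroid.eRk_closure_eq] at h2
  have h3 := h2.trans (Matroid.eRk_le_encard _ _)
  rw [← Set.image_univ, ht.injective.encard_image] at h3
  have h4 := h3.trans ((Set.image_univ (f := g) ▸ Set.encard_image_le g Set.univ :))
  simpa using h4

/-- A finite supremum in `ℕ∞` of a nonempty set of naturals is attained. -/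
theorem iSup_nat_ne_top {P : ℕ → Prop} (h0 : P 0) (h : (⨆ (n : ℕ) (_ : P n), (n : ℕ∞)) ≠ ⊤) :
    P (⨆ (n : ℕ) (_ : P n), (n : ℕ∞)).toNat ∧
      ∀ m, P m → m ≤ (⨆ (n : ℕ) (_ : P n), (n : ℕ∞)).toNat := by
  have hle : ∀ m, P m → m ≤ (⨆ (n : ℕ) (_ : P n), (n : ℕ∞)).toNat := fun m hm ↦ by
    rw [← ENat.natCast_le_natCast, ENat.natCast_toNat h]
    exact le_iSup₂ (f := fun (n : ℕ) (_ : P n) ↦ (n : ℕ∞)) m hm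
  refine ⟨?_, hle⟩
  have hmax := Nat.findGreatest_spec (P := P) (Nat.zero_le _) h0
    (n := (⨆ (n : ℕ) (_ : P n), (n : ℕ∞)).toNat)
  convert hmax
  refine le_antisymm ?_ (hle _ hmax)
  rw [← ENat.natCast_le_natCast, ENat.natCast_toNat h]
  exact iSup₂_le fun m hm ↦ by exact_mod_cast Nat.le_findGreatest (hle m hm) hm

/-- The relative algebraic closure of `k(g)` in `L`. -/
def relClosure (k L : Subfield K) {s : ℕ} (g : Fin s → K) : Subfield K :=
  (algebraicClosure (IntermediateField.adjoin k (Set.range g)) K).toSubfield ⊓ L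

theorem mem_relClosure {k L : Subfield K} {s : ℕ} {g : Fin s → K} {x : K} :
    x ∈ relClosure k L g ↔ IsAlgebraic (IntermediateField.adjoin k (Set.range g)) x ∧ x ∈ L := by
  rw [← mem_algebraicClosure_iff]; rfl

theorem isAlgClosed_relClosure (k L : Subfield K) [IsAlgClosed L] {s : ℕ} (g : Fin s → K) :
    IsAlgClosed (relClosure k L g) := by
  apply IsAlgClosed.of_exists_root
  intro p hp hirr
  have hL : relClosure k L g ≤ L := inf_le_right
  obtain ⟨z, hz⟩ := IsAlgClosed.exists_root (p.map (Subfield.inclusion hL)) (by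
    rw [degree_map]; exact hirr.degree_pos.ne')
  have hz' : eval₂ (relClosure k L g).subtype (z : K) p = 0 := by
    have := congrArg L.subtype hz
    rwa [eval_map, hom_eval₂, map_zero] at this
  have hzc : (z : K) ∈ relClosure k L g := by
    refine mem_relClosure.mpr ⟨?_, z.2⟩
    set A := algebraicClosure (IntermediateField.adjoin k (Set.range g)) K
    let i : relClosure k L g →+* A := Subfield.inclusion (inf_le_left (a := A.toSubfield))
    have hA : IsAlgebraic A (z : K) := by
      refine ⟨p.map i, (Polynomial.map_ne_zero_iff i.injective).mpr hp.ne_zero, ?_⟩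
      rw [aeval_def, eval₂_map]
      exact hz'
    exact hA.restrictScalars _
  refine ⟨⟨z, hzc⟩, (relClosure k L g).subtype.injective ?_⟩
  rw [← eval₂_at_apply, map_zero]
  exact hz'
end

/-! ### Independence of the forms over a self-sufficient field -/

section
variable {K : Type*} [Field K]

/-- Self-sufficiency rules out `r` independent elements `(y i, x i)` of `Γ(L)` with all `y i ∈ k` and
`∑ c i * x i ∈ k` for constants `c i` not all zero: the algebraic closure of `k(x)` in
`L` would have transcendence degree less than `r`, hence negative predimension. -/
theorem false_of_sum_mem {der : K → K} {k : Subfield K} (hss : SelfSufficientIn der k)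
    {L : Subfield K} [IsAlgClosed L] (hkL : k ≤ L) {s : ℕ} {f : Fin (s + 1) → Kˣ × K}
    (hf : ∀ i, GammaMem der L (f i)) (hind : GammaIndep der k f) (hy : ∀ i, ((f i).1 : K) ∈ k)
    {c : Fin (s + 1) → K} (hc : ∀ i, c i ∈ k) (j : Fin (s + 1)) (hj : c j ≠ 0)
    (hx : ∑ i, c i * (f i).2 ∈ k) : False := by
  let g : Fin s → K := fun i ↦ (f (j.succAbove i)).2
  set F := IntermediateField.adjoin k (Set.range g)
  have hkF : ∀ a ∈ k, a ∈ F := fun a ha ↦ F.algebraMap_mem ⟨a, ha⟩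
  have hgF : ∀ i, g i ∈ F := fun i ↦ subset_adjoin _ _ ⟨i, rfl⟩
  have hxF : ∀ i, (f i).2 ∈ F := by
    intro i
    rcases Fin.eq_self_or_eq_succAbove j i with rfl | ⟨i, rfl⟩
    · have : (f i).2 = (∑ i, c i * (f i).2 - ∑ l, c (i.succAbove l) * g l) / c i := by
        rw [Fin.sum_univ_succAbove _ i, add_sub_cancel_right]
        field_simp
      rw [this]
      exact div_mem (sub_mem (hkF _ hx) (sum_mem fun l _ ↦ mul_mem (hkF _ (hc _)) (hgF l)))
        (hkF _ (hc i))
    · exact hgF i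
  have hFL : ∀ a ∈ F, a ∈ L → a ∈ relClosure k L g := fun a ha haL ↦
    mem_relClosure.mpr ⟨isAlgebraic_algebraMap (⟨a, ha⟩ : F), haL⟩
  have htr : trdegE k (relClosure k L g) ≤ s := by
    refine iSup₂_le fun n hn ↦ ?_
    obtain ⟨t, ht, hti⟩ := hn
    exact_mod_cast le_of_isAlgebraic_adjoin g (algIndepOver_iff.mp hti)
      fun i ↦ (mem_relClosure.mp (ht i)).1
  have hdim : ((s + 1 : ℕ) : ℕ∞) ≤ gammaDim der k (relClosure k L g) := by
    refine le_iSup₂ (f := fun (n : ℕ) (_ : ∃ f : Fin n → Kˣ × K,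
      (∀ i, GammaMem der (relClosure k L g) (f i)) ∧ GammaIndep der k f) ↦ (n : ℕ∞)) (s + 1)
      ⟨f, fun i ↦ ⟨?_, ?_, (hf i).2.2⟩, hind⟩
    · exact hFL _ (hkF _ (hy i)) (hf i).1
    · exact hFL _ (hxF i) (hf i).2.1
  have htop : trdegE k (relClosure k L g) ≠ ⊤ := ne_top_of_le_ne_top (ENat.natCast_ne_top s) htr
  have h := hss (relClosure k L g) (fun a ha ↦ hFL a (hkF a ha) (hkL ha))
    (isAlgClosed_relClosure k L g) htop
  rw [deltaPre] at h
  split_ifs at h with h'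
  · simp at h
  · have h1 : (0 : ℤ) ≤ (trdegE k (relClosure k L g)).toNat -
      ((gammaDim der k (relClosure k L g)).toNat : ℤ) := by exact_mod_cast h
    have h2 := ENat.toNat_le_of_le_natCast htr
    have h3 := ENat.toNat_le_toNat hdim h'
    rw [ENat.toNat_natCast] at h3
    omega

/-- The functional analogue of Ax's theorem over a self-sufficient `k`: elements of `Γ(L)` independent
modulo `Γ(k)` have `K`-linearly independent forms. In a relation of minimal length the
coefficients, normalised by `c 0 = 1`, are constants (apply `D`) and `ℤ`-independent
(otherwise combine the pairs to a shorter family). -/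
theorem eq_zero_of_sum_omega [CharZero K] {D : Derivation ℤ K K} {k : Subfield K} [IsAlgClosed k]
    (hkdiff : ∀ c ∈ k, D c ∈ k) (hkC : ∀ x : K, D x = 0 → x ∈ k) (hss : SelfSufficientIn D k)
    {L : Subfield K} [IsAlgClosed L] (hkL : k ≤ L) {r : ℕ} : ∀ {f : Fin r → Kˣ × K}
    (_ : ∀ i, GammaMem D L (f i)) (_ : GammaIndep D k f) {a : Fin r → K}
    (_ : ∑ i, a i • omega k (f i) = 0), a = 0 := by
  induction r with
  | zero => intros; exact Subsingleton.elim _ _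
  | succ s ih =>
  intro f hf hind a ha
  by_contra ha0
  -- by minimality a relation with one zero coefficient is trivial
  have hA : ∀ (b : Fin (s + 1) → K) (j), ∑ i, b i • omega k (f i) = 0 → b j = 0 → b = 0 := by
    intro b j hb hj
    have h1 := ih (f := fun i ↦ gammaComb f (Pi.single (j.succAbove i) 1))
      (fun i ↦ GammaMem.comb hf _) (hind.comb _ fun m hm ↦ by
        ext i
        simpa [Pi.single_apply] using hm (j.succAbove i)) (a := fun i ↦ b (j.succAbove i)) (by
        rw [Fin.sum_univ_succAbove _ j, hj, zero_smul, zero_add] at hb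
        rw [← hb]
        refine Finset.sum_congr rfl fun i _ ↦ ?_
        rw [omega_gammaComb]
        simp [Pi.single_apply])
    ext i
    rcases Fin.eq_self_or_eq_succAbove j i with rfl | ⟨i, rfl⟩
    · exact hj
    · exact congrFun h1 i
  have hane : ∀ i, a i ≠ 0 := fun i hi ↦ ha0 (hA a i ha hi)
  obtain ⟨c, hc, hc1⟩ : ∃ c : Fin (s + 1) → K, ∑ i, c i • omega k (f i) = 0 ∧ c 0 = 1 := by
    refine ⟨fun i ↦ (a 0)⁻¹ * a i, ?_, inv_mul_cancel₀ (hane 0)⟩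
    simp only [mul_smul, ← Finset.smul_sum, ha, smul_zero]
  have hcne : ∀ i, c i ≠ 0 := fun i hi ↦ by
    have := congrFun (hA c i hc hi) 0
    simp [hc1] at this
  -- the coefficients `D (c i)` form another relation, and `D (c 0) = D 1 = 0`
  have hDc : (fun i ↦ D (c i)) = 0 := by
    refine hA _ 0 ?_ (by simp [hc1])
    ext E
    obtain ⟨E', hE'⟩ := exists_commutator hkdiff E
    have h1 := congrArg D (LinearMap.congr_fun hc E)
    have h2 := LinearMap.congr_fun hc E'
    simp only [LinearMap.sum_apply, LinearMap.smul_apply, smul_eq_mul, map_sum,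
      Derivation.leibniz, derivation_omega hE' (hf _), LinearMap.zero_apply, map_zero,
      Finset.sum_add_distrib] at h1 h2 ⊢
    rw [h2, zero_add] at h1
    simpa only [mul_comm] using h1
  have hck : ∀ i, c i ∈ k := fun i ↦ hkC _ (congrFun hDc i)
  have hcind : ∀ m : Fin (s + 1) → ℤ, ∑ i, (m i : K) * c i = 0 → m = 0 := by
    intro m hm
    by_contra hm0
    obtain ⟨j, hj⟩ := Function.ne_iff.mp hm0
    have hjK : (m j : K) ≠ 0 := by exact_mod_cast hj
    -- eliminate `c j` between the integer relation and the relation of forms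
    have h1 := ih (f := fun i ↦ gammaComb f
        (m j • Pi.single (j.succAbove i) 1 - m (j.succAbove i) • Pi.single j 1))
      (fun i ↦ GammaMem.comb hf _) (hind.comb _ fun n hn ↦ by
        ext i
        have := hn (j.succAbove i)
        exact (mul_eq_zero.mp (by simpa [Pi.single_apply] using this)).resolve_right hj) (a := fun i ↦ c (j.succAbove i)) (by
        have h3 : ∀ i, omega k (gammaComb f
            (m j • Pi.single (j.succAbove i) 1 - m (j.succAbove i) • Pi.single j 1)) =
            (m j : K) • omega k (f (j.succAbove i)) -
              (m (j.succAbove i) : K) • omega k (f j) := fun i ↦ by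
          rw [omega_gammaComb]
          ext E
          simp [Pi.single_apply, sub_mul, Finset.sum_sub_distrib]
        rw [Fin.sum_univ_succAbove _ j] at hc hm
        simp only [h3, smul_sub, Finset.sum_sub_distrib, smul_comm _ (m j : K), ← Finset.smul_sum]
        rw [eq_neg_of_add_eq_zero_right hc]
        simp only [smul_smul, ← Finset.sum_smul, mul_comm (c _)]
        rw [eq_neg_of_add_eq_zero_right hm]
        module)
    have h2 : m j * c j = 0 := by
      rw [Fin.sum_univ_succAbove _ j] at hm
      simpa [fun i ↦ congrFun h1 i] using hm
    exact mul_ne_zero hjK (hcne j) h2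
  have hres : ∀ E : Derivation k K K, ∑ i, c i * (E ((f i).1 : K) / (f i).1) =
      E (∑ i, c i * (f i).2) := by
    intro E
    have h1 := LinearMap.congr_fun hc E
    have h2 : ∀ i, E (c i) = 0 := fun i ↦ E.map_algebraMap ⟨_, hck i⟩
    simp only [LinearMap.sum_apply, LinearMap.smul_apply, smul_eq_mul, omega_apply, mul_sub,
      Finset.sum_sub_distrib, LinearMap.zero_apply, sub_eq_zero] at h1
    simp [h1, h2]
  have hy : ∀ i, ((f i).1 : K) ∈ k := fun i ↦ by
    obtain ⟨b, hb⟩ := mem_range_of_sum_logDeriv (k := k) (fun i ↦ ⟨c i, hck i⟩)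
      (fun m hm ↦ hcind m (by simpa using congrArg k.subtype hm)) (fun i ↦ ((f i).1 : K))
      (fun i ↦ (f i).1.ne_zero) _ hres i
    exact hb ▸ b.2
  have hx : ∑ i, c i * (f i).2 ∈ k := by
    obtain ⟨b, hb⟩ := mem_range_of_forall_derivation (k := k) (y := ∑ i, c i * (f i).2) fun E ↦ by
      rw [← hres]
      refine Finset.sum_eq_zero fun i _ ↦ ?_
      rw [show E ((f i).1 : K) = 0 from E.map_algebraMap ⟨_, hy i⟩]
      simp
    exact hb ▸ b.2
  exact false_of_sum_mem hss hkL hf hind hy hck 0 (hcne 0) hx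
end

/-! ### Derivations vanishing on `L` -/

section
variable {K : Type*} [Field K]

/-- A `k`-derivation that vanishes on `S` vanishes on everything algebraic over `k[S]`. -/
theorem derivation_eq_zero_of_isAlgebraic [CharZero K] {k : Subfield K} (E : Derivation k K K)
    {S : Set K} (hS : ∀ z ∈ S, E z = 0) {x : K} (hx : IsAlgebraic (Algebra.adjoin k S) x) :
    E x = 0 := by
  let Z : Subfield K :=
    { carrier := {z | E z = 0}
      mul_mem' := fun {a b} ha hb ↦ by simp_all
      one_mem' := by simp
      add_mem' := fun {a b} ha hb ↦ by simp_all
      zero_mem' := by simp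
      neg_mem' := fun {a} ha ↦ by simp_all
      inv_mem' := fun a ha ↦ by simp_all [Derivation.leibniz_inv] }
  obtain ⟨E', hE'⟩ := exists_derivation_of_eq_zero Z (E.restrictScalars ℤ) fun c hc ↦ hc
  have hle : ∀ a ∈ Algebra.adjoin k S, a ∈ Z := by
    intro a ha
    induction ha using Algebra.adjoin_induction with
    | mem a ha => exact hS a ha
    | algebraMap r => exact E.map_algebraMap r
    | add a b _ _ ha hb => exact add_mem ha hb
    | mul a b _ _ ha hb => exact mul_mem ha hb
  have hxZ : IsAlgebraic Z x := by
    obtain ⟨p, hp, hpx⟩ := hx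
    let i : Algebra.adjoin k S →+* Z :=
      { toFun := fun a ↦ ⟨a, hle a a.2⟩
        map_one' := rfl
        map_mul' := fun _ _ ↦ rfl
        map_zero' := rfl
        map_add' := fun _ _ ↦ rfl }
    have hi : Function.Injective i := fun a b h ↦ Subtype.ext (congrArg (fun z : Z ↦ (z : K)) h)
    refine ⟨p.map i, (Polynomial.map_ne_zero_iff hi).mpr hp, ?_⟩
    rw [aeval_def, eval₂_map]
    exact hpx
  have h1 := congrArg E' (minpoly.aeval Z x)
  rw [Derivation.map_aeval, map_zero, smul_eq_mul] at h1
  have h2 := (minpoly.irreducible hxZ.isIntegral).separable.aeval_derivative_ne_zero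
    (minpoly.aeval Z x)
  have h3 := hE' x
  rw [(mul_eq_zero.mp h1).resolve_left h2] at h3
  exact h3.symm

theorem isAlgebraic_of_maximal {k L : Subfield K} {n : ℕ} {t : Fin n → K} (ht : ∀ i, t i ∈ L)
    (hti : AlgIndepOver k t)
    (hmax : ∀ m, (∃ x : Fin m → K, (∀ i, x i ∈ L) ∧ AlgIndepOver k x) → m ≤ n)
    {x : K} (hx : x ∈ L) : IsAlgebraic (Algebra.adjoin k (Set.range t)) x := by
  by_contra h
  have h1 := ((algIndepOver_iff.mp hti).option_iff_transcendental x).mpr h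
  let e : Fin (n + 1) ≃ Option (Fin n) := finSuccEquiv n
  have h2 := hmax (n + 1) ⟨_, fun i ↦ ?_, algIndepOver_iff.mpr (h1.comp e e.injective)⟩
  · omega
  · dsimp only [Function.comp]
    cases e i with
    | none => exact hx
    | some i => exact ht i

/-- The forms of a `ℚ`-basis of `Γ(L)` modulo `Γ(k)` span the restrictions of the functionals `E ↦ E z`,
`z ∈ L`, because there are `trdeg(L/k)` of them; being horizontal, they force `D` to preserve `L`. -/
theorem mem_of_deltaPre_eq_zero [CharZero K] {D : Derivation ℤ K K} {k : Subfield K} [IsAlgClosed k]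
    (hkdiff : ∀ c ∈ k, D c ∈ k) (hkC : ∀ x : K, D x = 0 → x ∈ k) (hss : SelfSufficientIn D k)
    {L : Subfield K} [IsAlgClosed L] (hkL : k ≤ L) (hfinL : trdegE k L ≠ ⊤)
    (hzero : deltaPre D k L = 0) {x : K} (hx : x ∈ L) : D x ∈ L := by
  obtain ⟨htop, heq⟩ : gammaDim D k L ≠ ⊤ ∧ (trdegE k L).toNat = (gammaDim D k L).toNat := by
    rw [deltaPre] at hzero
    split_ifs at hzero with h
    · simp at hzero
    · have h1 : ((trdegE k L).toNat : ℤ) - ((gammaDim D k L).toNat : ℤ) = 0 := by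
        exact_mod_cast hzero
      exact ⟨h, by omega⟩
  have htr : (∃ t : Fin (trdegE k L).toNat → K, (∀ i, t i ∈ L) ∧ AlgIndepOver k t) ∧
      ∀ m, (∃ t : Fin m → K, (∀ i, t i ∈ L) ∧ AlgIndepOver k t) → m ≤ (trdegE k L).toNat :=
    iSup_nat_ne_top (P := fun n ↦ ∃ t : Fin n → K, (∀ i, t i ∈ L) ∧ AlgIndepOver k t)
      ⟨Fin.elim0, fun i ↦ i.elim0, by
        rw [algIndepOver_iff, algebraicIndependent_empty_type_iff]
        exact (algebraMap k K).injective⟩ hfinL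
  have hdim : ∃ f : Fin (gammaDim D k L).toNat → Kˣ × K,
      (∀ i, GammaMem D L (f i)) ∧ GammaIndep D k f :=
    (iSup_nat_ne_top
      (P := fun n ↦ ∃ f : Fin n → Kˣ × K, (∀ i, GammaMem D L (f i)) ∧ GammaIndep D k f)
      ⟨Fin.elim0, fun i ↦ i.elim0, fun _ _ ↦ Subsingleton.elim _ _⟩ htop).1
  rw [← heq] at hdim
  generalize (trdegE k L).toNat = n at htr hdim
  obtain ⟨⟨t, htL, hti⟩, hmax⟩ := htr
  obtain ⟨f, hfL, hfi⟩ := hdim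
  -- a `k`-derivation is determined on `L` by its values on the transcendence basis `t`
  have hkill : ∀ E : Derivation k K K, (∀ i, E (t i) = 0) → ∀ z ∈ L, E z = 0 := fun E hE z hz ↦
    derivation_eq_zero_of_isAlgebraic E (by rintro _ ⟨i, rfl⟩; exact hE i)
      (isAlgebraic_of_maximal htL hti hmax hz)
  let τ : Fin n → (Derivation k K K →ₗ[K] K) := fun i ↦
    { toFun := fun E ↦ E (t i), map_add' := fun _ _ ↦ rfl, map_smul' := fun _ _ ↦ rfl }
  let ω : Fin n → (Derivation k K K →ₗ[K] K) := fun i ↦ omega k (f i)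
  have hω : LinearIndependent K ω := Fintype.linearIndependent_iff.mpr fun a ha ↦
    congrFun (eq_zero_of_sum_omega hkdiff hkC hss hkL hfL hfi ha)
  have hle : Submodule.span K (Set.range ω) ≤ Submodule.span K (Set.range τ) := by
    rw [Submodule.span_le]
    rintro _ ⟨i, rfl⟩
    refine mem_span_of_iInf_ker_le_ker fun E hE ↦ ?_
    have h0 := hkill E fun j ↦ (Submodule.mem_iInf _).mp hE j
    rw [LinearMap.mem_ker]
    simp [ω, omega_apply, h0 _ (hfL i).1, h0 _ (hfL i).2.1]
  have hspan : Submodule.span K (Set.range ω) = Submodule.span K (Set.range τ) := by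
    have : FiniteDimensional K (Submodule.span K (Set.range τ)) :=
      FiniteDimensional.span_of_finite K (Set.finite_range τ)
    refine Submodule.eq_of_le_of_finrank_le hle ?_
    rw [finrank_span_eq_card hω]
    exact finrank_range_le_card τ
  -- hence the `n` forms `ω i` cut out exactly the derivations vanishing on `L`
  have hωkill : ∀ E : Derivation k K K, (∀ i, omega k (f i) E = 0) → ∀ z ∈ L, E z = 0 := by
    intro E hE
    refine hkill E fun i ↦ ?_
    have h1 : τ i ∈ Submodule.span K (Set.range ω) := hspan ▸ Submodule.subset_span ⟨i, rfl⟩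
    have h2 : Submodule.span K (Set.range ω) ≤ LinearMap.ker (LinearMap.applyₗ (R := K) E) := by
      rw [Submodule.span_le]
      rintro _ ⟨j, rfl⟩
      exact hE j
    exact h2 h1
  by_contra hDx
  have htrans : Transcendental L (D x) := fun h ↦ by
    obtain ⟨b, hb⟩ := mem_range_of_isAlgebraic h
    exact hDx (hb ▸ b.2)
  obtain ⟨E₀, hE₀⟩ := exists_derivation_eq_one' htrans
  have hE₀L : ∀ z ∈ L, E₀ z = 0 := fun z hz ↦ E₀.map_algebraMap ⟨z, hz⟩
  obtain ⟨E, hE⟩ := exists_derivation_of_eq_zero k (E₀.restrictScalars ℤ) fun c hc ↦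
    hE₀L c (hkL hc)
  have hEL : ∀ z ∈ L, E z = 0 := fun z hz ↦ (hE z).trans (hE₀L z hz)
  -- `E` kills `L`, so by horizontality of the forms `[D, E]` kills `L` too; on `x` this reads
  -- `E (D x) = 0`
  obtain ⟨E', hE'⟩ := exists_commutator hkdiff E
  have h1 := hωkill E' (fun i ↦ by
    rw [← derivation_omega hE' (hfL i), omega_apply, hEL _ (hfL i).1, hEL _ (hfL i).2.1]
    simp) x hx
  rw [hE', hEL x hx, map_zero, zero_sub, neg_eq_zero, hE] at h1
  exact one_ne_zero (hE₀.symm.trans h1)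

end

end Derivations

/-!
STATEMENT 10: Let `(K, der)` have constants `C ⊆ k`, with `k` an algebraically closed
self-sufficient differential subfield. If `k ⊆ L ⊆ K` is algebraically closed with
`trdeg(L/k)` finite and `δ(L/k) = 0`, and `L` is contained in a differential subfield `M`
of finite transcendence degree over `k`, then `L` is itself a differential subfield:
`der(L) ⊆ L`.
-/

theorem stmt10 {K : Type*} [Field K] [CharZero K]
    (der : K → K)
    (hadd : ∀ a b : K, der (a + b) = der a + der b)
    (hmul : ∀ a b : K, der (a * b) = a * der b + b * der a)
    (k : Subfield K) (hkalg : IsAlgClosed ↥k)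
    (hkdiff : ∀ c ∈ k, der c ∈ k)
    (hkC : ∀ x : K, der x = 0 → x ∈ k)
    (hss : SelfSufficientIn der k)
    (L : Subfield K) (hkL : k ≤ L) (hLalg : IsAlgClosed ↥L)
    (hfinL : trdegE k L ≠ ⊤) (hzero : deltaPre der k L = 0)
    (M : Subfield K) (hLM : L ≤ M) (hMdiff : ∀ x ∈ M, der x ∈ M)
    (hfinM : trdegE k M ≠ ⊤) :
    ∀ x ∈ L, der x ∈ L := by
  let D : Derivation ℤ K K := Derivation.mk' (AddMonoidHom.mk' der hadd).toIntLinearMap hmul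
  intro x hx
  exact mem_of_deltaPre_eq_zero (D := D) hkdiff hkC hss hkL hfinL hzero hx
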